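/- For every τ ∈ ℍ and every z ∈ ℂ with z ∉ Λ_τ, the τ-derivative of ℘′ satisfies ∂℘′/∂τ(z|τ) = (−i/(4π))[6(℘(z|τ) − η₁(τ))℘′(z|τ) + (ζ(z|τ) − zη₁(τ))(12℘(z|τ)² − g₂(τ))]. -/

import Mathlib

open Complex Filter Topology Asymptotics

noncomputable section

/-- membership in the lattice `Λ_τ = ℤ + τℤ`. -/
def InLattice (τ z : ℂ) : Prop := ∃ m n : ℤ, z = (m : ℂ) + (n : ℂ) * τ

/-- the half-period generators `ω₀ = 0, ω₁ = 1, ω₂ = τ, ω₃ = 1 + τ`. -/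
def halfp (τ : ℂ) : Fin 4 → ℂ := ![0, 1, τ, 1 + τ]

/-- the Weierstrass elliptic function `℘(z|τ)`. -/
def wp (τ z : ℂ) : ℂ :=
  z⁻¹ ^ 2 + ∑' w : {w : ℤ × ℤ // w ≠ 0},
    ((z - ((w.1.1 : ℂ) + (w.1.2 : ℂ) * τ))⁻¹ ^ 2 - ((w.1.1 : ℂ) + (w.1.2 : ℂ) * τ)⁻¹ ^ 2)

/-- `℘′(z|τ)`, the `z`-derivative of `℘`. -/
def wpd (τ z : ℂ) : ℂ := deriv (wp τ) z

/-- `℘″(z|τ)`. -/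
def wpdd (τ z : ℂ) : ℂ := deriv (wpd τ) z

def e1 (τ : ℂ) : ℂ := wp τ (1 / 2)
def e2 (τ : ℂ) : ℂ := wp τ (τ / 2)
def e3 (τ : ℂ) : ℂ := wp τ ((1 + τ) / 2)

def g2 (τ : ℂ) : ℂ := -4 * (e1 τ * e2 τ + e1 τ * e3 τ + e2 τ * e3 τ)

/-- `zeta` is the Weierstrass zeta function: for each `τ ∈ ℍ`, `zeta τ` is odd, satisfies
`∂ζ/∂z = -℘` off the lattice, and `ζ(z|τ) - 1/z → 0` as `z → 0`. -/
def IsWeierstrassZeta (zeta : ℂ → ℂ → ℂ) : Prop :=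
  ∀ τ : ℂ, 0 < τ.im →
    (∀ z : ℂ, zeta τ (-z) = - zeta τ z) ∧
    (∀ z : ℂ, ¬ InLattice τ z → HasDerivAt (zeta τ) (- wp τ z) z) ∧
    Tendsto (fun z => zeta τ z - z⁻¹) (𝓝[≠] (0 : ℂ)) (𝓝 0)

/-- `eta1 τ = ζ(z+1|τ) - ζ(z|τ)` is the first quasi-period. -/
def IsEta1 (zeta : ℂ → ℂ → ℂ) (eta1 : ℂ → ℂ) : Prop :=
  ∀ τ : ℂ, 0 < τ.im → ∀ z : ℂ, ¬ InLattice τ z →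
    eta1 τ = zeta τ (z + 1) - zeta τ z

/-- `eta2 τ = ζ(z+τ|τ) - ζ(z|τ)` is the second quasi-period. -/
def IsEta2 (zeta : ℂ → ℂ → ℂ) (eta2 : ℂ → ℂ) : Prop :=
  ∀ τ : ℂ, 0 < τ.im → ∀ z : ℂ, ¬ InLattice τ z →
    eta2 τ = zeta τ (z + τ) - zeta τ z

/-- `sigma` is the Weierstrass sigma function: entire, odd, with
`∂/∂z log σ = ζ` off the lattice and `σ(z|τ)/z → 1` as `z → 0`. -/
def IsWeierstrassSigma (zeta sigma : ℂ → ℂ → ℂ) : Prop :=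
  ∀ τ : ℂ, 0 < τ.im →
    (∀ z : ℂ, sigma τ (-z) = - sigma τ z) ∧
    Differentiable ℂ (sigma τ) ∧
    (∀ z : ℂ, ¬ InLattice τ z → HasDerivAt (sigma τ) (zeta τ z * sigma τ z) z) ∧
    Tendsto (fun z => sigma τ z / z) (𝓝[≠] (0 : ℂ)) (𝓝 1)

/-- the Hamiltonian system (142) for `(p(τ), A(τ))` on `V`. -/
def HamSystem (n : Fin 4 → ℂ) (zeta : ℂ → ℂ → ℂ) (eta1 : ℂ → ℂ)
    (V : Set ℂ) (p A : ℂ → ℂ) : Prop :=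
  ∀ τ ∈ V,
    HasDerivAt p ((-Complex.I / (4 * (Real.pi : ℂ))) *
      (2 * A τ - zeta τ (2 * p τ) + 2 * p τ * eta1 τ)) τ ∧
    HasDerivAt A ((Complex.I / (4 * (Real.pi : ℂ))) *
      ((2 * wp τ (2 * p τ) + 2 * eta1 τ) * A τ - (3 / 2) * wpd τ (2 * p τ)
        - ∑ k : Fin 4, n k * (n k + 1) * wpd τ (p τ + halfp τ k / 2))) τ

/-- the generalized Lamé potential `I(z;τ)`. -/
def Ipot (n : Fin 4 → ℂ) (zeta : ℂ → ℂ → ℂ) (A B p τ z : ℂ) : ℂ :=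
  (∑ k : Fin 4, n k * (n k + 1) * wp τ (z + halfp τ k / 2))
    + (3 / 4) * (wp τ (z + p) + wp τ (z - p))
    + A * (zeta τ (z + p) - zeta τ (z - p)) + B

end

namespace PeriodPair

variable (L : PeriodPair)

/-- A function that is periodic under a closed subgroup `M` containing the lattice, holomorphic
off `M`, and agrees with an analytic germ near `0`, is constant off `M`. -/
lemma apply_eq_of_analyticAt_zero {M : AddSubgroup ℂ} (hM : IsClosed (M : Set ℂ))
    (hLM : ∀ l ∈ L.lattice, l ∈ M) {f A : ℂ → ℂ} (hf : DifferentiableOn ℂ f (M : Set ℂ)ᶜ)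
    (hper : ∀ l ∈ M, Function.Periodic f l) (hA : AnalyticAt ℂ A 0)
    (hfA : ∀ᶠ z in 𝓝[≠] (0 : ℂ), z ∉ M ∧ f z = A z) {z : ℂ} (hz : z ∉ M) : f z = A 0 := by
  classical
  let g : ℂ → ℂ := fun z ↦ if z ∈ M then A 0 else f z
  have gper (x l : ℂ) (hl : l ∈ M) : g (x + l) = g x := by
    simp only [g, M.add_mem_cancel_right hl, hper l hl x]
  have g0 : DifferentiableAt ℂ g 0 := by
    refine hA.differentiableAt.congr_of_eventuallyEq ?_
    rw [eventually_nhdsWithin_iff] at hfA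
    filter_upwards [hfA] with x hx
    by_cases h0 : x = 0
    · simp [g, h0]
    · simp [g, (hx h0).1, (hx h0).2]
  have gd : Differentiable ℂ g := by
    intro x
    by_cases hx : x ∈ M
    · have hsub : g = fun y ↦ g (y - x) := by
        funext y
        rw [← gper (y - x) x hx, sub_add_cancel]
      rw [hsub]
      refine DifferentiableAt.comp x (g := g) (f := fun y ↦ y - x) ?_ (by fun_prop)
      simpa using g0
    · refine (hf.differentiableAt (hM.isOpen_compl.mem_nhds hx)).congr_of_eventuallyEq ?_
      filter_upwards [hM.isOpen_compl.mem_nhds hx] with y hy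
      have hy' : y ∉ M := hy
      simp [g, hy']
  have := gd.apply_eq_apply_of_bounded (IsZLattice.isCompact_range_of_periodic L.lattice _
    gd.continuous fun x w hw ↦ gper x w (hLM w hw)).isBounded z 0
  simpa [g, hz] using this

lemma isPreconnected_compl_lattice : IsPreconnected ((L.lattice : Set ℂ)ᶜ) := by
  have hc : (L.lattice : Set ℂ).Countable := by
    have : Countable L.lattice := L.latticeEquivProd.injective.countable
    exact Set.countable_coe_iff.mp this
  exact (hc.isConnected_compl_of_one_lt_rank (by simp)).isPreconnected

lemma eventually_notMem_lattice : ∀ᶠ z in 𝓝[≠] (0 : ℂ), z ∉ L.lattice := by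
  filter_upwards [self_mem_nhdsWithin, mem_nhdsWithin_of_mem_nhds
    (L.compl_lattice_sdiff_singleton_mem_nhds 0)] with z hz hz' h
  exact hz' ⟨h, hz⟩

lemma derivWeierstrassP_eq_zero_add (z : ℂ) :
    L.derivWeierstrassP z = L.derivWeierstrassPExcept 0 z - 2 / z ^ 3 := by
  simpa using (L.derivWeierstrassPExcept_sub 0 z).symm

lemma weierstrassP_eq_zero_add (z : ℂ) :
    L.weierstrassP z = L.weierstrassPExcept 0 z + 1 / z ^ 2 := by
  simpa using (L.weierstrassPExcept_add 0 z).symm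

lemma eventually_derivWeierstrassP_ne_zero {w : ℂ} (hw : w ∉ L.lattice) :
    ∀ᶠ z in 𝓝[≠] w, L.derivWeierstrassP z ≠ 0 := by
  have han := L.analyticOnNhd_derivWeierstrassP w hw
  refine han.eventually_eq_zero_or_eventually_ne_zero.resolve_left fun h ↦ ?_
  have heq := L.analyticOnNhd_derivWeierstrassP.eqOn_zero_of_preconnected_of_eventuallyEq_zero
    L.isPreconnected_compl_lattice hw h
  have h2 : ∀ᶠ z in 𝓝[≠] (0 : ℂ), z ^ 3 * L.derivWeierstrassPExcept 0 z = 2 := by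
    filter_upwards [L.eventually_notMem_lattice, self_mem_nhdsWithin] with z hz hz0
    have := heq hz
    rw [L.derivWeierstrassP_eq_zero_add, Pi.zero_apply] at this
    have hz0 : z ≠ 0 := hz0
    rw [sub_eq_zero] at this
    rw [this]
    field_simp
  have hc : ContinuousAt (fun z : ℂ ↦ z ^ 3 * L.derivWeierstrassPExcept 0 z) 0 :=
    ((continuousAt_id.pow 3).mul (L.analyticAt_derivWeierstrassPExcept 0).continuousAt)
  have h3 := (hc.tendsto.mono_left nhdsWithin_le_nhds).congr' h2
  have := tendsto_nhds_unique h3 tendsto_const_nhds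
  norm_num at this

lemma hasDerivAt_weierstrassP {z : ℂ} (hz : z ∉ L.lattice) :
    HasDerivAt L.weierstrassP (L.derivWeierstrassP z) z := by
  rw [← L.deriv_weierstrassP]
  exact (L.analyticOnNhd_weierstrassP z hz).differentiableAt.hasDerivAt

lemma deriv_derivWeierstrassP {z : ℂ} (hz : z ∉ L.lattice) :
    deriv L.derivWeierstrassP z = 6 * L.sumInvPow z 4 := by
  rw [← L.deriv_derivWeierstrassPExcept_self, L.derivWeierstrassPExcept_of_notMem z hz]

/-- `2℘″ = 12℘² - g₂`. -/
lemma two_mul_deriv_derivWeierstrassP {z : ℂ} (hz : z ∉ L.lattice) :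
    2 * deriv L.derivWeierstrassP z = 12 * L.weierstrassP z ^ 2 - L.g₂ := by
  have key : ∀ w ∉ L.lattice, L.derivWeierstrassP w *
      (2 * deriv L.derivWeierstrassP w - (12 * L.weierstrassP w ^ 2 - L.g₂)) = 0 := by
    intro w hw
    have h1 := L.hasDerivAt_weierstrassP hw
    have h2 := (L.analyticOnNhd_derivWeierstrassP w hw).differentiableAt.hasDerivAt
    have h3 := (((h1.pow 3).const_mul 4).sub (h1.const_mul L.g₂)).sub_const L.g₃
    have h4 := h3.unique ((h2.pow 2).congr_of_eventuallyEq (by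
      filter_upwards [L.isClosed_lattice.isOpen_compl.mem_nhds hw] with y hy
      simpa using (L.derivWeierstrassP_sq y hy).symm))
    push_cast at h4
    linear_combination -h4
  have hE : ContinuousAt (fun w ↦ 2 * deriv L.derivWeierstrassP w -
      (12 * L.weierstrassP w ^ 2 - L.g₂)) z := by
    have h1 := (L.analyticOnNhd_derivWeierstrassP z hz).deriv
    have h2 := L.analyticOnNhd_weierstrassP z hz
    have : AnalyticAt ℂ (fun w ↦ 2 * deriv L.derivWeierstrassP w -
      (12 * L.weierstrassP w ^ 2 - L.g₂)) z := by fun_prop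
    exact this.continuousAt
  have h0 : ∀ᶠ w in 𝓝[≠] z, 2 * deriv L.derivWeierstrassP w -
      (12 * L.weierstrassP w ^ 2 - L.g₂) = 0 := by
    filter_upwards [L.eventually_derivWeierstrassP_ne_zero hz, mem_nhdsWithin_of_mem_nhds
      (L.isClosed_lattice.isOpen_compl.mem_nhds hz)] with w hw hw'
    exact (mul_eq_zero.mp (key w hw')).resolve_left hw
  have := tendsto_nhds_unique ((hE.tendsto.mono_left nhdsWithin_le_nhds).congr' h0)
    tendsto_const_nhds
  exact sub_eq_zero.mp this

lemma derivWeierstrassP_eq_zero_of_half_period {w : ℂ} (h2w : 2 * w ∈ L.lattice) :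
    L.derivWeierstrassP w = 0 := by
  have h1 := L.derivWeierstrassP_sub_coe w ⟨2 * w, h2w⟩
  rw [show w - 2 * w = -w by ring, L.derivWeierstrassP_neg] at h1
  exact self_eq_neg.mp h1.symm

/-- If `2w` is a lattice point and `w` is not, then `℘` takes the value `℘ w` only on `w + Λ`. -/
lemma weierstrassP_ne_of_half_period {w : ℂ} (hw : w ∉ L.lattice) (h2w : 2 * w ∈ L.lattice)
    {z : ℂ} (hz : z ∉ L.lattice) (hzw : z - w ∉ L.lattice) :
    L.weierstrassP z ≠ L.weierstrassP w := by
  set e := L.weierstrassP w with he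
  have hdw := L.derivWeierstrassP_eq_zero_of_half_period h2w
  let M : AddSubgroup ℂ :=
    { carrier := {x | x ∈ L.lattice ∨ x - w ∈ L.lattice}
      zero_mem' := Or.inl L.lattice.zero_mem
      add_mem' := by
        rintro a b (ha | ha) (hb | hb)
        · exact Or.inl (add_mem ha hb)
        · exact Or.inr (by simpa [add_sub_assoc] using add_mem ha hb)
        · exact Or.inr (by simpa [sub_add_eq_add_sub] using add_mem ha hb)
        · refine Or.inl ?_
          have := add_mem (add_mem ha hb) h2w
          ring_nf at this ⊢
          exact this
      neg_mem' := by
        rintro a (ha | ha)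
        · exact Or.inl (neg_mem ha)
        · refine Or.inr ?_
          have := neg_mem (add_mem ha h2w)
          ring_nf at this ⊢
          exact this }
  have hMw (x : ℂ) (hx : x + w ∈ L.lattice) : x ∈ M := by
    refine Or.inr ?_
    have := sub_mem hx h2w
    ring_nf at this ⊢
    exact this
  have hMc : IsClosed (M : Set ℂ) := by
    have : (M : Set ℂ) = (L.lattice : Set ℂ) ∪ (fun x ↦ x - w) ⁻¹' (L.lattice : Set ℂ) := rfl
    rw [this]
    exact L.isClosed_lattice.union (L.isClosed_lattice.preimage (by fun_prop))
  let f : ℂ → ℂ := fun x ↦ (L.weierstrassP x - e) * (L.weierstrassP (x + w) - e)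
  have fper : ∀ l ∈ M, Function.Periodic f l := by
    rintro l (hl | hl) x
    · have h1 := L.weierstrassP_add_coe x ⟨l, hl⟩
      have h2 := L.weierstrassP_add_coe (x + w) ⟨l, hl⟩
      simp only [f]
      rw [h1, show x + l + w = x + w + l by ring, h2]
    · have h1 := L.weierstrassP_add_coe (x + w) ⟨l - w, hl⟩
      have h2 := L.weierstrassP_add_coe x ⟨l - w + 2 * w, add_mem hl h2w⟩
      simp only [f]
      rw [show x + l = x + w + (l - w) by ring, h1,
        show x + w + (l - w) + w = x + (l - w + 2 * w) by ring, h2]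
      ring
  have fd : DifferentiableOn ℂ f (M : Set ℂ)ᶜ := by
    intro x hx
    have hx1 : x ∉ L.lattice := fun h ↦ hx (Or.inl h)
    have hx2 : x + w ∉ L.lattice := fun h ↦ hx (hMw x h)
    have h1 := (L.analyticOnNhd_weierstrassP x hx1).differentiableAt
    have h2 := (L.analyticOnNhd_weierstrassP _ hx2).differentiableAt
    have h3 : DifferentiableAt ℂ (fun x ↦ L.weierstrassP (x + w)) x :=
      DifferentiableAt.comp x (g := L.weierstrassP) (f := fun x ↦ x + w) h2 (by fun_prop)
    exact ((h1.sub_const e).mul (h3.sub_const e)).differentiableWithinAt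
  have hka : AnalyticAt ℂ (fun x ↦ L.weierstrassP (x + w) - e) 0 := by
    have h2 := L.analyticOnNhd_weierstrassP w hw
    have h3 : AnalyticAt ℂ (fun x ↦ L.weierstrassP (x + w)) 0 :=
      AnalyticAt.comp (g := L.weierstrassP) (f := fun x ↦ x + w) (by simpa using h2) (by fun_prop)
    exact h3.sub analyticAt_const
  have hkd : HasDerivAt (fun x ↦ L.weierstrassP (x + w) - e) 0 0 := by
    have h1 : HasDerivAt L.weierstrassP 0 (0 + w) := by
      rw [zero_add, ← hdw]
      exact L.hasDerivAt_weierstrassP hw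
    exact (h1.comp_add_const 0 w).sub_const e
  obtain ⟨K, hK, hKeq⟩ := (natCast_le_analyticOrderAt hka (n := 2)).mp
    ((natCast_le_analyticOrderAt_iff_iteratedDeriv_eq_zero hka).mpr (by
      intro i hi
      interval_cases i
      · simp [he]
      · simpa using hkd.deriv))
  have hMev : ∀ᶠ x in 𝓝[≠] (0 : ℂ), x ∉ M := by
    have h1 : ∀ᶠ x in 𝓝[≠] (0 : ℂ), x - w ∉ L.lattice := by
      refine mem_nhdsWithin_of_mem_nhds ?_
      have : (fun x ↦ x - w) ⁻¹' (L.lattice : Set ℂ)ᶜ ∈ 𝓝 (0 : ℂ) :=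
        (L.isClosed_lattice.isOpen_compl.preimage (by fun_prop)).mem_nhds (by simpa using hw)
      exact this
    filter_upwards [L.eventually_notMem_lattice, h1] with x hx hx'
    rintro (h | h)
    exacts [hx h, hx' h]
  let A : ℂ → ℂ := fun x ↦ (1 + x ^ 2 * (L.weierstrassPExcept 0 x - e)) * K x
  have hA : AnalyticAt ℂ A 0 := by
    have := L.analyticAt_weierstrassPExcept 0
    fun_prop
  have hfA : ∀ᶠ x in 𝓝[≠] (0 : ℂ), x ∉ M ∧ f x = A x := by
    filter_upwards [hMev, mem_nhdsWithin_of_mem_nhds hKeq, self_mem_nhdsWithin] with x hx hk h0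
    refine ⟨hx, ?_⟩
    have h0 : x ≠ 0 := h0
    simp only [f, A]
    rw [hk, L.weierstrassP_eq_zero_add, sub_zero, smul_eq_mul]
    field_simp
    ring
  have hconst (x : ℂ) (hx : x ∉ M) : f x = A 0 :=
    L.apply_eq_of_analyticAt_zero hMc (fun l hl ↦ Or.inl hl) fd fper hA hfA hx
  intro hcontra
  have hA0 : A 0 = 0 := by
    rw [← hconst z (by rintro (h | h); exacts [hz h, hzw h])]
    simp [f, hcontra]
  have hne : ∀ᶠ x in 𝓝[≠] (0 : ℂ), L.weierstrassP x ≠ e := by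
    have hc : ContinuousAt (fun x : ℂ ↦ 1 + x ^ 2 * (L.weierstrassPExcept 0 x - e)) 0 := by
      have := L.analyticAt_weierstrassPExcept 0
      have : AnalyticAt ℂ (fun x : ℂ ↦ 1 + x ^ 2 * (L.weierstrassPExcept 0 x - e)) 0 := by fun_prop
      exact this.continuousAt
    filter_upwards [mem_nhdsWithin_of_mem_nhds (hc.eventually_ne (y := 0) (by simp)),
      self_mem_nhdsWithin] with x hx h0 h
    have h0 : x ≠ 0 := h0
    apply hx
    rw [L.weierstrassP_eq_zero_add] at h
    rw [← h]
    field_simp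
    ring
  have hcst : ∀ᶠ x in 𝓝[≠] (0 : ℂ), L.weierstrassP (x + w) = e := by
    filter_upwards [hMev, hne] with x hx hx'
    have := hconst x hx
    rw [hA0] at this
    exact sub_eq_zero.mp ((mul_eq_zero.mp this).resolve_left (sub_ne_zero.mpr hx'))
  have hcst' : ∀ᶠ x in 𝓝 w, L.weierstrassP x = e := by
    rw [eventually_nhdsWithin_iff] at hcst
    have ht : Tendsto (fun x : ℂ ↦ x - w) (𝓝 w) (𝓝 0) := by
      have : ContinuousAt (fun x : ℂ ↦ x - w) w := by fun_prop
      simpa using this.tendsto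
    filter_upwards [ht.eventually hcst] with x hx
    by_cases h : x = w
    · rw [h]
    · simpa using hx (sub_ne_zero.mpr h)
  have hd0 : ∀ᶠ x in 𝓝 w, L.derivWeierstrassP x = 0 := by
    filter_upwards [hcst'.eventually_nhds] with x hx
    rw [← L.deriv_weierstrassP]
    have : L.weierstrassP =ᶠ[𝓝 x] fun _ ↦ e := hx
    rw [this.deriv_eq, deriv_const]
  obtain ⟨x, hx, hx'⟩ := ((hd0.filter_mono nhdsWithin_le_nhds).and
    (L.eventually_derivWeierstrassP_ne_zero hw)).exists
  exact hx' hx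

end PeriodPair

/-- The period pair `(1, τ)`. -/
noncomputable def tauPair (τ : ℂ) (hτ : 0 < τ.im) : PeriodPair where
  ω₁ := 1
  ω₂ := τ
  indep := by
    refine LinearIndependent.pair_iff.mpr fun s t h ↦ ?_
    have him := congrArg Complex.im h
    have hre := congrArg Complex.re h
    simp only [Complex.add_im, Complex.smul_im, Complex.one_im, smul_eq_mul, mul_zero, zero_add,
      Complex.zero_im, mul_eq_zero, hτ.ne', or_false] at him
    simp [him] at hre
    exact ⟨hre, him⟩

lemma mem_tauPair_lattice {τ : ℂ} (hτ : 0 < τ.im) {z : ℂ} :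
    z ∈ (tauPair τ hτ).lattice ↔ InLattice τ z := by
  rw [PeriodPair.mem_lattice]
  simp only [tauPair, mul_one, InLattice, eq_comm]

lemma tauPair_latticeEquivProd_symm {τ : ℂ} (hτ : 0 < τ.im) (x : ℤ × ℤ) :
    (((tauPair τ hτ).latticeEquivProd.symm x : (tauPair τ hτ).lattice) : ℂ) = x.1 + x.2 * τ := by
  rw [PeriodPair.latticeEquiv_symm_apply]
  simp [tauPair]

/-- Sums over the lattice `ℤ + ℤτ` are sums over `ℤ × ℤ`. -/
lemma hasSum_int_prod {τ : ℂ} (hτ : 0 < τ.im) {E : Type*} [AddCommMonoid E] [TopologicalSpace E]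
    {f : ℂ → E} {a : E} (h : HasSum (fun l : (tauPair τ hτ).lattice ↦ f l) a) :
    HasSum (fun x : ℤ × ℤ ↦ f (x.1 + x.2 * τ)) a := by
  have := ((tauPair τ hτ).latticeEquivProd.symm.toEquiv.hasSum_iff
    (f := fun l : (tauPair τ hτ).lattice ↦ f l)).mpr h
  simpa only [Function.comp_def, LinearEquiv.coe_toEquiv, tauPair_latticeEquivProd_symm] using this

lemma wp_eq {τ : ℂ} (hτ : 0 < τ.im) : wp τ = (tauPair τ hτ).weierstrassP := by
  funext z
  have h := hasSum_int_prod hτ (f := fun l ↦ 1 / (z - l) ^ 2 - 1 / l ^ 2)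
    ((tauPair τ hτ).hasSum_weierstrassP z)
  rw [← h.tsum_eq, wp, ← h.summable.tsum_subtype_add_tsum_subtype_compl {0}]
  congr 1
  · simp
  · refine tsum_congr fun x ↦ ?_
    simp

lemma wpd_eq {τ : ℂ} (hτ : 0 < τ.im) : wpd τ = (tauPair τ hτ).derivWeierstrassP := by
  funext z
  rw [wpd, wp_eq hτ, PeriodPair.deriv_weierstrassP]

lemma hasSum_wpd {τ : ℂ} (hτ : 0 < τ.im) (z : ℂ) :
    HasSum (fun x : ℤ × ℤ ↦ -2 / (z - (x.1 + x.2 * τ)) ^ 3) (wpd τ z) := by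
  rw [wpd_eq hτ]
  exact hasSum_int_prod hτ (f := fun l ↦ -2 / (z - l) ^ 3)
    ((tauPair τ hτ).hasSum_derivWeierstrassP z)

lemma summable_norm_sub_pow_three {τ : ℂ} (hτ : 0 < τ.im) (z : ℂ) :
    Summable (fun x : ℤ × ℤ ↦ (‖z - (x.1 + x.2 * τ)‖ ^ 3)⁻¹) := by
  refine (hasSum_int_prod hτ (f := fun l ↦ (‖z - l‖ ^ 3)⁻¹) (Summable.hasSum ?_)).summable
  convert! ZLattice.summable_norm_sub_zpow (tauPair τ hτ).lattice (-3) (by simp) z using 2 with l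
  rw [norm_sub_rev, zpow_neg]
  rfl

/-- The invariant `g2` in terms of the half-period values agrees with the Eisenstein series. -/
lemma g2_eq {τ : ℂ} (hτ : 0 < τ.im) : g2 τ = (tauPair τ hτ).g₂ := by
  set L := tauPair τ hτ with hL
  have mem (z : ℂ) : z ∈ L.lattice ↔ InLattice τ z := mem_tauPair_lattice hτ
  have half (α β : ℚ) : (α + β * τ : ℂ) ∈ L.lattice ↔ α.den = 1 ∧ β.den = 1 := by
    have := L.mul_ω₁_add_mul_ω₂_mem_lattice (α := α) (β := β)
    rwa [show L.ω₁ = 1 from rfl, show L.ω₂ = τ from rfl, mul_one] at this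
  have n1 : (1 / 2 : ℂ) ∉ L.lattice := by
    simpa using (half (1 / 2) 0).not.mpr (by norm_num)
  have n2 : τ / 2 ∉ L.lattice := by
    have := (half 0 (1 / 2)).not.mpr (by norm_num)
    push_cast at this
    ring_nf at this ⊢
    exact this
  have n3 : (1 + τ) / 2 ∉ L.lattice := by
    have := (half (1 / 2) (1 / 2)).not.mpr (by norm_num)
    push_cast at this
    ring_nf at this ⊢
    exact this
  have p1 : 2 * (1 / 2 : ℂ) ∈ L.lattice := (mem _).mpr ⟨1, 0, by norm_num⟩
  have p2 : 2 * (τ / 2) ∈ L.lattice := (mem _).mpr ⟨0, 1, by push_cast; ring⟩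
  have d12 : e2 τ ≠ e1 τ := by
    rw [e1, e2, wp_eq hτ]
    refine L.weierstrassP_ne_of_half_period n1 p1 n2 ?_
    have := (half (-1 / 2) (1 / 2)).not.mpr (by norm_num)
    push_cast at this
    ring_nf at this ⊢
    exact this
  have d13 : e3 τ ≠ e1 τ := by
    rw [e1, e3, wp_eq hτ]
    refine L.weierstrassP_ne_of_half_period n1 p1 n3 ?_
    ring_nf at n2 ⊢
    exact n2
  have d23 : e3 τ ≠ e2 τ := by
    rw [e2, e3, wp_eq hτ]
    refine L.weierstrassP_ne_of_half_period n2 p2 n3 ?_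
    ring_nf at n1 ⊢
    exact n1
  have root (w : ℂ) (hw : w ∉ L.lattice) (h2w : 2 * w ∈ L.lattice) :
      4 * wp τ w ^ 3 - L.g₂ * wp τ w - L.g₃ = 0 := by
    rw [wp_eq hτ, ← L.derivWeierstrassP_sq w hw, L.derivWeierstrassP_eq_zero_of_half_period h2w]
    norm_num
  have r1 : 4 * e1 τ ^ 3 - L.g₂ * e1 τ - L.g₃ = 0 := root _ n1 p1
  have r2 : 4 * e2 τ ^ 3 - L.g₂ * e2 τ - L.g₃ = 0 := root _ n2 p2
  have r3 : 4 * e3 τ ^ 3 - L.g₂ * e3 τ - L.g₃ = 0 :=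
    root _ n3 ((mem _).mpr ⟨1, 1, by push_cast; ring⟩)
  have q12 : 4 * (e1 τ ^ 2 + e1 τ * e2 τ + e2 τ ^ 2) - L.g₂ = 0 :=
    mul_left_cancel₀ (sub_ne_zero.mpr d12) (by linear_combination r2 - r1)
  have q13 : 4 * (e1 τ ^ 2 + e1 τ * e3 τ + e3 τ ^ 2) - L.g₂ = 0 :=
    mul_left_cancel₀ (sub_ne_zero.mpr d13) (by linear_combination r3 - r1)
  have hs : e1 τ + e2 τ + e3 τ = 0 :=
    mul_left_cancel₀ (sub_ne_zero.mpr d23) (by linear_combination (q13 - q12) / 4)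
  rw [g2]
  linear_combination q12 - 4 * (e1 τ + e2 τ) * hs

/-- The termwise `τ`-derivative of the series of `℘′`. -/
noncomputable def wpdTau (τ z : ℂ) : ℂ :=
  ∑' x : ℤ × ℤ, -6 * x.2 / (z - (x.1 + x.2 * τ)) ^ 4

lemma exists_norm_sub_bounds {τ : ℂ} (hτ : 0 < τ.im) {z : ℂ}
    (hz : ∀ m n : ℤ, n ≠ 0 → z ≠ m + n * τ) :
    ∃ d > 0, ∃ C > 0, ∀ x : ℤ × ℤ, (x.2 ≠ 0 → d ≤ ‖z - (x.1 + x.2 * τ)‖) ∧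
      ‖(x.2 : ℂ)‖ ≤ C * ‖z - (x.1 + x.2 * τ)‖ := by
  let S : Set ℂ := {w | ∃ m n : ℤ, n ≠ 0 ∧ w = m + n * τ}
  have hS : IsClosed S := (tauPair τ hτ).isClosed_of_subset_lattice (by
    rintro w ⟨m, n, -, hw⟩
    exact (mem_tauPair_lattice hτ).mpr ⟨m, n, hw⟩)
  have hzS : z ∈ Sᶜ := by
    rintro ⟨m, n, hn, hw⟩
    exact hz m n hn hw
  obtain ⟨d, hd, hball⟩ := Metric.isOpen_iff.mp hS.isOpen_compl z hzS
  have hdist (x : ℤ × ℤ) (hx : x.2 ≠ 0) : d ≤ ‖z - (x.1 + x.2 * τ)‖ := by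
    by_contra! h
    refine hball (a := (x.1 + x.2 * τ : ℂ)) ?_ ⟨x.1, x.2, hx, rfl⟩
    rwa [Metric.mem_ball, dist_comm, dist_eq_norm]
  refine ⟨d, hd, (‖z‖ / d + 1) / τ.im, by positivity, fun x ↦ ⟨hdist x, ?_⟩⟩
  by_cases hx : x.2 = 0
  · simp only [hx, Int.cast_zero, norm_zero]
    positivity
  have h1 : |z.im - x.2 * τ.im| ≤ ‖z - (x.1 + x.2 * τ)‖ := by
    have := Complex.abs_im_le_norm (z - (x.1 + x.2 * τ))
    simpa using this
  have h2 : |(x.2 : ℝ)| * τ.im ≤ |z.im| + |z.im - x.2 * τ.im| := by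
    have := abs_sub_abs_le_abs_sub ((x.2 : ℝ) * τ.im) z.im
    rw [abs_mul, abs_of_pos hτ, abs_sub_comm] at this
    linarith
  have h3 : ‖z‖ ≤ ‖z‖ / d * ‖z - (x.1 + x.2 * τ)‖ := by
    rw [div_mul_eq_mul_div, le_div_iff₀ hd]
    exact mul_le_mul_of_nonneg_left (hdist x hx) (norm_nonneg z)
  rw [Complex.norm_intCast, div_mul_eq_mul_div, le_div_iff₀ hτ]
  linarith [Complex.abs_im_le_norm z]

/-- If `v` is comparable to `w` and `n` is bounded by `w`, the summand of `wpdTau` is `O(w⁻³)`. -/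
lemma norm_summand_le {n w v : ℂ} {C : ℝ} (hn : ‖n‖ ≤ C * ‖w‖) (hv : ‖w‖ ≤ 2 * ‖v‖) :
    ‖-6 * n / v ^ 4‖ ≤ 96 * C * (‖w‖ ^ 3)⁻¹ := by
  rcases eq_or_ne w 0 with rfl | hw
  · have : n = 0 := by simpa using hn
    simp [this]
  have hw' : 0 < ‖w‖ := norm_pos_iff.mpr hw
  have hv' : 0 < ‖v‖ := by linarith
  have h4 : ‖w‖ ^ 4 ≤ 16 * ‖v‖ ^ 4 := by
    calc ‖w‖ ^ 4 ≤ (2 * ‖v‖) ^ 4 := by gcongr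
      _ = 16 * ‖v‖ ^ 4 := by ring
  have hC : 0 ≤ C := by
    by_contra! hC
    have := mul_neg_of_neg_of_pos hC hw'
    linarith [norm_nonneg n]
  rw [norm_div, norm_mul, norm_neg, norm_pow, div_le_iff₀ (by positivity)]
  calc ‖(6 : ℂ)‖ * ‖n‖ ≤ 6 * (C * ‖w‖) := by
        rw [show ‖(6 : ℂ)‖ = 6 by norm_num]
        gcongr
    _ = 6 * C * (‖w‖ ^ 3)⁻¹ * ‖w‖ ^ 4 := by field_simp
    _ ≤ 6 * C * (‖w‖ ^ 3)⁻¹ * (16 * ‖v‖ ^ 4) := by gcongr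
    _ = 96 * C * (‖w‖ ^ 3)⁻¹ * ‖v‖ ^ 4 := by ring

lemma summable_wpdTau {τ : ℂ} (hτ : 0 < τ.im) {z : ℂ}
    (hz : ∀ m n : ℤ, n ≠ 0 → z ≠ m + n * τ) :
    Summable fun x : ℤ × ℤ ↦ -6 * (x.2 : ℂ) / (z - (x.1 + x.2 * τ)) ^ 4 := by
  obtain ⟨d, hd, C, hC, h⟩ := exists_norm_sub_bounds hτ hz
  refine .of_norm_bounded ((summable_norm_sub_pow_three hτ z).mul_left (96 * C)) fun x ↦ ?_
  exact norm_summand_le (h x).2 (by linarith [norm_nonneg (z - (x.1 + x.2 * τ))])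

lemma differentiableAt_wpdTau {τ : ℂ} (hτ : 0 < τ.im) {z : ℂ}
    (hz : ∀ m n : ℤ, n ≠ 0 → z ≠ m + n * τ) : DifferentiableAt ℂ (wpdTau τ) z := by
  obtain ⟨d, hd, C, hC, h⟩ := exists_norm_sub_bounds hτ hz
  have hcmp (x : ℤ × ℤ) (hx : x.2 ≠ 0) (y : ℂ) (hy : y ∈ Metric.ball z (d / 2)) :
      ‖z - (x.1 + x.2 * τ)‖ ≤ 2 * ‖y - (x.1 + x.2 * τ)‖ := by
    have h1 := (h x).1 hx
    have h2 := norm_sub_norm_le (z - (x.1 + x.2 * τ)) (y - (x.1 + x.2 * τ))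
    rw [show z - (x.1 + x.2 * τ) - (y - (x.1 + x.2 * τ)) = z - y by ring, norm_sub_rev z y] at h2
    rw [Metric.mem_ball, dist_eq_norm] at hy
    linarith
  have : DifferentiableOn ℂ (wpdTau τ) (Metric.ball z (d / 2)) := by
    refine differentiableOn_tsum_of_summable_norm
      ((summable_norm_sub_pow_three hτ z).mul_left (96 * C)) (fun x ↦ ?_) Metric.isOpen_ball
      fun x y hy ↦ ?_
    · by_cases hx : x.2 = 0
      · simp [hx]
      intro y hy
      have h0 : y - (x.1 + x.2 * τ) ≠ 0 := by
        intro h0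
        have h1 := hcmp x hx y hy
        rw [h0, norm_zero, mul_zero] at h1
        linarith [(h x).1 hx]
      have hd : DifferentiableAt ℂ (fun y : ℂ ↦ -6 * (x.2 : ℂ) / (y - (x.1 + x.2 * τ)) ^ 4) y :=
        DifferentiableAt.fun_div (by fun_prop) (by fun_prop) (pow_ne_zero 4 h0)
      exact hd.differentiableWithinAt
    · by_cases hx : x.2 = 0
      · simp only [hx, Int.cast_zero, mul_zero, zero_div, norm_zero]
        positivity
      exact norm_summand_le (h x).2 (hcmp x hx y hy)
  exact this.differentiableAt (Metric.ball_mem_nhds z (by positivity))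

/-- Termwise differentiation of the series of `℘′` in `τ`. -/
lemma hasDerivAt_wpd_tau {τ : ℂ} (hτ : 0 < τ.im) {z : ℂ} (hz : ¬ InLattice τ z) :
    HasDerivAt (fun t ↦ wpd t z) (wpdTau τ z) τ := by
  have hz' (x : ℤ × ℤ) : z - (x.1 + x.2 * τ) ≠ 0 := fun h ↦ hz ⟨x.1, x.2, sub_eq_zero.mp h⟩
  obtain ⟨d, hd, C, hC, h⟩ := exists_norm_sub_bounds hτ (z := z)
    fun m n _ h ↦ hz ⟨m, n, h⟩
  let r : ℝ := min (τ.im) (1 / (2 * C))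
  have hr : 0 < r := lt_min hτ (by positivity)
  have hcmp (x : ℤ × ℤ) (t : ℂ) (ht : t ∈ Metric.ball τ r) :
      ‖z - (x.1 + x.2 * τ)‖ ≤ 2 * ‖z - (x.1 + x.2 * t)‖ := by
    have h2 := norm_sub_norm_le (z - (x.1 + x.2 * τ)) (z - (x.1 + x.2 * t))
    rw [show z - (x.1 + x.2 * τ) - (z - (x.1 + x.2 * t)) = x.2 * (t - τ) by ring, norm_mul] at h2
    rw [Metric.mem_ball, dist_eq_norm] at ht
    have h3 : ‖t - τ‖ ≤ 1 / (2 * C) := ht.le.trans (min_le_right _ _)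
    have h4 : ‖(x.2 : ℂ)‖ * ‖t - τ‖ ≤ C * ‖z - (x.1 + x.2 * τ)‖ * (1 / (2 * C)) :=
      mul_le_mul (h x).2 h3 (norm_nonneg _) (by positivity)
    have h5 : C * ‖z - (x.1 + x.2 * τ)‖ * (1 / (2 * C)) = ‖z - (x.1 + x.2 * τ)‖ / 2 := by
      field_simp
    linarith
  have hτr : τ ∈ Metric.ball τ r := Metric.mem_ball_self hr
  have key := hasDerivAt_tsum_of_isPreconnected
    (g := fun (x : ℤ × ℤ) t ↦ -2 / (z - (x.1 + x.2 * t)) ^ 3)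
    (g' := fun (x : ℤ × ℤ) t ↦ -6 * x.2 / (z - (x.1 + x.2 * t)) ^ 4)
    ((summable_norm_sub_pow_three hτ z).mul_left (96 * C)) Metric.isOpen_ball
    (convex_ball τ r).isPreconnected (fun x t ht ↦ ?_)
    (fun x t ht ↦ norm_summand_le (h x).2 (hcmp x t ht)) hτr (hasSum_wpd hτ z).summable hτr
  · refine key.congr_of_eventuallyEq ?_
    filter_upwards [Metric.ball_mem_nhds τ hr] with t ht
    have ht' : 0 < t.im := by
      rw [Metric.mem_ball, dist_eq_norm] at ht
      have h1 := (Complex.abs_im_le_norm (t - τ)).trans_lt (ht.trans_le (min_le_left _ _))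
      rw [Complex.sub_im] at h1
      linarith [(abs_lt.mp h1).1]
    exact (hasSum_wpd ht' z).tsum_eq.symm
  · have h0 : z - (x.1 + x.2 * t) ≠ 0 := by
      intro h0
      have h1 := hcmp x t ht
      rw [h0, norm_zero, mul_zero] at h1
      exact hz' x (norm_le_zero_iff.mp h1)
    have h1 : HasDerivAt (fun t : ℂ ↦ z - (x.1 + x.2 * t)) (-x.2) t := by
      simpa using (((hasDerivAt_id t).const_mul (x.2 : ℂ)).const_add (x.1 : ℂ)).const_sub z
    have h2 := (hasDerivAt_const t (-2 : ℂ)).fun_div (h1.fun_pow 3) (pow_ne_zero 3 h0)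
    convert! h2 using 1
    field_simp
    push_cast
    ring

lemma wpdTau_neg (τ z : ℂ) : wpdTau τ (-z) = -wpdTau τ z := by
  rw [wpdTau, wpdTau, ← (Equiv.neg (ℤ × ℤ)).tsum_eq, ← tsum_neg]
  refine tsum_congr fun x ↦ ?_
  have : -z - ((-x).1 + (-x).2 * τ : ℂ) = -(z - (x.1 + x.2 * τ)) := by
    push_cast [Prod.fst_neg, Prod.snd_neg]
    ring
  simp only [Equiv.neg_apply, Prod.fst_neg, Prod.snd_neg, Int.cast_neg] at this ⊢
  rw [this]
  ring

lemma wpdTau_add_one (τ z : ℂ) : wpdTau τ (z + 1) = wpdTau τ z := by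
  rw [wpdTau, wpdTau, ← (Equiv.addRight ((1, 0) : ℤ × ℤ)).tsum_eq]
  refine tsum_congr fun x ↦ ?_
  simp only [Equiv.coe_addRight, Prod.fst_add, Prod.snd_add, Int.cast_add, add_zero, Int.cast_one]
  congr 2
  ring

lemma wpdTau_add_tau {τ : ℂ} (hτ : 0 < τ.im) {z : ℂ} (hz : ¬ InLattice τ z) :
    wpdTau τ (z + τ) = wpdTau τ z - deriv (wpd τ) z := by
  have hs := summable_wpdTau hτ (z := z) fun m n _ h ↦ hz ⟨m, n, h⟩
  have h4 := (hasSum_int_prod hτ (f := fun l ↦ ((l - z) ^ 4)⁻¹)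
    ((tauPair τ hτ).hasSum_sumInvPow z (r := 4) (by norm_num))).mul_left 6
  rw [wpd_eq hτ, (tauPair τ hτ).deriv_derivWeierstrassP
    (fun h ↦ hz ((mem_tauPair_lattice hτ).mp h))]
  have h5 := hs.hasSum.sub h4
  rw [← wpdTau] at h5
  rw [← h5.tsum_eq, wpdTau, ← (Equiv.addRight ((0, 1) : ℤ × ℤ)).tsum_eq]
  refine tsum_congr fun x ↦ ?_
  simp only [Equiv.coe_addRight, Prod.fst_add, Prod.snd_add, Int.cast_add, add_zero, Int.cast_one]
  rw [show z + τ - (x.1 + (x.2 + 1) * τ) = z - (x.1 + x.2 * τ) by ring,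
    show ((x.1 + x.2 * τ - z) ^ 4) = (z - (x.1 + x.2 * τ)) ^ 4 by ring]
  ring

lemma not_inLattice_of_im {τ : ℂ} (hτ : 0 < τ.im) {z : ℂ} (hz : |z.im| = τ.im / 2) :
    ¬ InLattice τ z := by
  rintro ⟨m, n, rfl⟩
  have h1 : |(n : ℝ)| * τ.im = τ.im / 2 := by
    rw [← hz, ← abs_of_pos hτ, ← abs_mul]
    simp [abs_of_pos hτ]
  have h2 : |(n : ℝ)| = 1 / 2 := mul_right_cancel₀ hτ.ne' (by linarith)
  have h3 : (2 * |n| : ℤ) = 1 := by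
    have : (2 : ℝ) * |(n : ℝ)| = 1 := by linarith
    exact_mod_cast this
  omega

/-- A lattice point with imaginary part at most `Im τ / 2` is an integer. -/
lemma InLattice.exists_eq_intCast {τ : ℂ} (hτ : 0 < τ.im) {z : ℂ} (h : InLattice τ z)
    (hz : |z.im| ≤ τ.im / 2) : ∃ m : ℤ, z = m := by
  obtain ⟨m, n, rfl⟩ := h
  have h1 : |(n : ℝ)| * τ.im ≤ τ.im / 2 := by
    refine le_trans (le_of_eq ?_) hz
    simp [abs_mul, abs_of_pos hτ]
  have h2 : |(n : ℝ)| < 1 := by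
    by_contra! h
    nlinarith
  have h3 : n = 0 := by
    rw [← Int.abs_lt_one_iff]
    exact_mod_cast h2
  exact ⟨m, by simp [h3]⟩

/-- The integral of `1 / z` over two opposite sides of a rectangle centred at the origin. -/
lemma integral_inv_sq_add_sq_symm {a c : ℝ} (hc : 0 < c) :
    ∫ x : ℝ in -a..a, ((2 * c / (c ^ 2 + x ^ 2) : ℝ) : ℂ) =
      ((4 * Real.arctan (a / c) : ℝ) : ℂ) := by
  rw [intervalIntegral.integral_ofReal]
  simp only [div_eq_mul_inv, intervalIntegral.integral_const_mul]
  rw [integral_inv_sq_add_sq hc.ne', neg_div, Real.arctan_neg]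
  congr 1
  field_simp
  ring

/-- Legendre's relation, by integrating over the boundary of a rectangle around the pole. -/
lemma legendre_relation {τ : ℂ} (hτ : 0 < τ.im) {φ : ℂ → ℂ} {κ : ℂ}
    (hφ : ∀ z, ¬ InLattice τ z → DifferentiableAt ℂ φ z)
    (h0 : DifferentiableAt ℂ (fun z ↦ φ z - z⁻¹) 0)
    (h1 : ∀ z, ¬ InLattice τ z → φ (z + 1) = φ z)
    (hκ : ∀ z, ¬ InLattice τ z → φ (z + τ) = φ z + κ) : κ = -(2 * Real.pi * I) := by
  set h : ℝ := τ.im / 2 with hh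
  have hpos : 0 < h := by positivity
  set ρ : ℂ → ℂ := fun z ↦ φ z - z⁻¹ with hρ
  have edge_im (x y : ℝ) (hy : |y| = h) : ¬ InLattice τ (x + y * I) :=
    not_inLattice_of_im hτ (by simpa using hy)
  have edge_re (x y : ℝ) (hx : |x| = 1 / 2) (hy : |y| ≤ h) : ¬ InLattice τ (x + y * I) := by
    intro hl
    obtain ⟨m, hm⟩ := hl.exists_eq_intCast hτ (by simpa using hy)
    have hxm : x = m := by simpa using congrArg Complex.re hm
    rw [hxm] at hx
    have h3 : (2 * |m| : ℤ) = 1 := by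
      have : (2 : ℝ) * |(m : ℝ)| = 1 := by linarith
      exact_mod_cast this
    omega
  have dρ (z : ℂ) (hz : ¬ InLattice τ z) : DifferentiableAt ℂ ρ z := by
    have hz0 : z ≠ 0 := by
      rintro rfl
      exact hz ⟨0, 0, by simp⟩
    exact (hφ z hz).sub (differentiableAt_inv hz0)
  have rect := Complex.integral_boundary_rect_eq_zero_of_differentiableOn ρ
    (-(1 / 2 : ℝ) + (-h : ℝ) * I) ((1 / 2 : ℝ) + h * I) (by
      intro z hz
      refine DifferentiableAt.differentiableWithinAt ?_
      by_cases hl : InLattice τ z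
      · rw [Complex.mem_reProdIm] at hz
        simp only [Complex.add_re, Complex.add_im, Complex.neg_re, Complex.neg_im,
          Complex.ofReal_re, Complex.ofReal_im, Complex.mul_re, Complex.mul_im, Complex.I_re,
          Complex.I_im, mul_zero, mul_one, sub_zero, add_zero, neg_zero, zero_add] at hz
        rw [Set.uIcc_of_le (by norm_num), Set.uIcc_of_le (by linarith), Set.mem_Icc,
          Set.mem_Icc, ← abs_le, ← abs_le] at hz
        obtain ⟨m, rfl⟩ := hl.exists_eq_intCast hτ hz.2
        have hm : |(m : ℝ)| ≤ 1 / 2 := by simpa using hz.1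
        have hm0 : m = 0 := by
          rw [← Int.abs_lt_one_iff]
          exact_mod_cast hm.trans_lt (by norm_num : (1 / 2 : ℝ) < 1)
        simpa [hm0] using h0
      · exact dρ z hl)
  simp only [Complex.add_re, Complex.add_im, Complex.neg_re, Complex.neg_im,
    Complex.ofReal_re, Complex.ofReal_im, Complex.mul_re, Complex.mul_im, Complex.I_re,
    Complex.I_im, mul_zero, mul_one, sub_zero, add_zero, neg_zero, zero_add] at rect
  have cont (f : ℝ → ℂ) (hf : Continuous f) (s : Set ℝ) (hs : ∀ x ∈ s, ¬ InLattice τ (f x))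
      (F : ℂ → ℂ) (hF : ∀ z, ¬ InLattice τ z → DifferentiableAt ℂ F z) :
      ContinuousOn (fun x ↦ F (f x)) s := fun x hx ↦
    ((hF _ (hs x hx)).continuousAt.comp hf.continuousAt).continuousWithinAt
  have intHoriz (y : ℝ) (hy : |y| = h) (F : ℂ → ℂ)
      (hF : ∀ z, ¬ InLattice τ z → DifferentiableAt ℂ F z)
      (a b : ℝ) : IntervalIntegrable (fun x : ℝ ↦ F (x + y * I)) MeasureTheory.volume a b :=
    (cont (fun x : ℝ ↦ x + y * I) (by fun_prop) _ (fun x _ ↦ edge_im x y hy)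
      F hF).intervalIntegrable
  have intVert (x : ℝ) (hx : |x| = 1 / 2) :
      IntervalIntegrable (fun y : ℝ ↦ ρ (x + y * I)) MeasureTheory.volume (-h) h := by
    refine (cont (fun y : ℝ ↦ x + y * I) (by fun_prop) _ (fun y hy ↦ edge_re x y hx ?_)
      ρ dρ).intervalIntegrable
    rw [Set.uIcc_of_le (by linarith)] at hy
    exact abs_le.mpr hy
  have habs : |h| = h := abs_of_pos hpos
  have habs' : |-h| = h := by rw [abs_neg, habs]
  have top : ∫ x : ℝ in -(1 / 2)..1 / 2, φ (x + h * I) =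
      (∫ x : ℝ in -(1 / 2)..1 / 2, φ (x + (-h : ℝ) * I)) + κ := by
    have hper : Function.Periodic (fun x : ℝ ↦ φ (x + (-h : ℝ) * I)) 1 := by
      intro x
      have hx : ((x + 1 : ℝ) + (-h : ℝ) * I : ℂ) = x + (-h : ℝ) * I + 1 := by
        push_cast
        ring
      simp only [hx, h1 _ (edge_im x (-h) habs')]
    have hshift (x : ℝ) : φ (x + h * I) = φ ((x - τ.re : ℝ) + (-h : ℝ) * I) + κ := by
      rw [← hκ _ (edge_im _ (-h) habs')]
      congr 1
      apply Complex.ext <;> simp [hh]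
      ring
    simp only [hshift]
    rw [intervalIntegral.integral_add, intervalIntegral.integral_comp_sub_right
      (fun x : ℝ ↦ φ (x + (-h : ℝ) * I))]
    · have := hper.intervalIntegral_add_eq (-(1 / 2) - τ.re) (-(1 / 2))
      rw [show (-(1 / 2) - τ.re + 1 : ℝ) = 1 / 2 - τ.re by ring,
        show (-(1 / 2) + 1 : ℝ) = 1 / 2 by ring] at this
      rw [this]
      norm_num
    · refine (cont (fun x : ℝ ↦ (x - τ.re : ℝ) + (-h : ℝ) * I) (by fun_prop) _
        (fun x _ ↦ edge_im _ _ habs') φ hφ).intervalIntegrable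
    · exact intervalIntegrable_const
  have hden (c x : ℝ) (hc : 0 < c) : ((c : ℂ) ^ 2 + x ^ 2) ≠ 0 := by
    have : c ^ 2 + x ^ 2 ≠ 0 := by positivity
    exact_mod_cast this
  have hinv (x y : ℝ) (hxy : x ^ 2 + y ^ 2 ≠ 0) :
      (x + y * I : ℂ)⁻¹ = (x - y * I) / (x ^ 2 + y ^ 2) := by
    have h2 : (x ^ 2 + y ^ 2 : ℂ) ≠ 0 := by exact_mod_cast hxy
    refine inv_eq_of_mul_eq_one_right ?_
    rw [mul_div_assoc', div_eq_one_iff_eq h2]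
    linear_combination -(y : ℂ) ^ 2 * Complex.I_sq
  have kernel_int (c a b : ℝ) (hc : 0 < c) : IntervalIntegrable
      (fun x : ℝ ↦ ((2 * c / (c ^ 2 + x ^ 2) : ℝ) : ℂ)) MeasureTheory.volume a b := by
    refine Continuous.intervalIntegrable (Complex.continuous_ofReal.comp ?_) _ _
    exact Continuous.div (by fun_prop) (by fun_prop) fun x ↦ by positivity
  have horiz : (∫ x : ℝ in -(1 / 2)..1 / 2, ρ (x + (-h : ℝ) * I)) -
      (∫ x : ℝ in -(1 / 2)..1 / 2, ρ (x + h * I)) =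
      -κ - I * (4 * Real.arctan (1 / 2 / h) : ℝ) := by
    have hpt (x : ℝ) : ρ (x + (-h : ℝ) * I) - ρ (x + h * I) =
        φ (x + (-h : ℝ) * I) - φ (x + h * I) - I * (2 * h / (h ^ 2 + x ^ 2) : ℝ) := by
      simp only [hρ]
      rw [hinv x (-h) (by rw [neg_sq]; positivity), hinv _ _ (by positivity)]
      have h2 := hden h x hpos
      have h3 : (x : ℂ) ^ 2 + h ^ 2 ≠ 0 := by rwa [add_comm]
      push_cast
      rw [neg_sq]
      field_simp
      ring
    rw [← intervalIntegral.integral_sub (intHoriz _ habs' ρ dρ _ _) (intHoriz _ habs ρ dρ _ _)]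
    simp only [hpt]
    rw [intervalIntegral.integral_sub ((intHoriz _ habs' φ hφ _ _).sub (intHoriz _ habs φ hφ _ _))
      ((kernel_int h _ _ hpos).const_mul I), intervalIntegral.integral_sub (intHoriz _ habs' φ hφ _ _)
      (intHoriz _ habs φ hφ _ _), intervalIntegral.integral_const_mul,
      integral_inv_sq_add_sq_symm hpos, top]
    ring
  have vert : (∫ y : ℝ in -h..h, ρ ((1 / 2 : ℝ) + y * I)) -
      (∫ y : ℝ in -h..h, ρ ((-(1 / 2) : ℝ) + y * I)) =
      -((4 * Real.arctan (h / (1 / 2)) : ℝ) : ℂ) := by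
    rw [← integral_inv_sq_add_sq_symm (by norm_num), ← intervalIntegral.integral_neg,
      ← intervalIntegral.integral_sub (intVert _ (by norm_num)) (intVert _ (by norm_num))]
    refine intervalIntegral.integral_congr fun y hy ↦ ?_
    rw [Set.uIcc_of_le (by linarith)] at hy
    have hφy : φ ((1 / 2 : ℝ) + y * I) = φ ((-(1 / 2) : ℝ) + y * I) := by
      rw [← h1 _ (edge_re (-(1 / 2)) y (by norm_num) (abs_le.mpr hy))]
      congr 1
      push_cast
      ring
    simp only [hρ]
    rw [hφy, hinv _ _ (by positivity), hinv _ _ (by positivity)]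
    have h2 := hden (1 / 2) y (by norm_num)
    push_cast at h2 ⊢
    rw [neg_sq]
    field_simp
    ring
  have harctan := Real.arctan_inv_of_pos (x := h / (1 / 2)) (by positivity)
  rw [inv_div] at harctan
  rw [smul_eq_mul, smul_eq_mul, add_sub_assoc, ← mul_sub, horiz, vert, harctan] at rect
  push_cast at rect
  linear_combination -rect

/-- Vanishing to second order of `P` and third order of its primitive makes the Laurent tail of
the heat expression of `℘` cancel at the origin. -/
lemma exists_analyticAt_heat {P ρ : ℂ → ℂ} (hP : AnalyticAt ℂ P 0) (hρ : AnalyticAt ℂ ρ 0)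
    (hP0 : P 0 = 0) (hP1 : deriv P 0 = 0) (hρ0 : ρ 0 = 0)
    (hρP : deriv ρ =ᶠ[𝓝 0] fun z ↦ -P z) (η : ℂ) :
    ∃ B : ℂ → ℂ, AnalyticAt ℂ B 0 ∧ ∀ᶠ z in 𝓝[≠] (0 : ℂ),
      6 * (P z + 1 / z ^ 2 - η) * (deriv P z - 2 / z ^ 3) +
        (ρ z + z⁻¹ - z * η) * (2 * (deriv (deriv P) z + 6 / z ^ 4)) = B z := by
  have ordP : ((2 : ℕ) : ℕ∞) ≤ analyticOrderAt P 0 := by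
    rw [natCast_le_analyticOrderAt_iff_iteratedDeriv_eq_zero hP]
    intro i hi
    interval_cases i <;> simp [hP0, hP1]
  have ordρ : ((3 : ℕ) : ℕ∞) ≤ analyticOrderAt ρ 0 := by
    have h := hρ.analyticOrderAt_deriv_add_one
    simp only [hρ0, sub_zero] at h
    rw [← h, analyticOrderAt_congr hρP, show (fun z ↦ -P z) = -P from rfl, analyticOrderAt_neg]
    exact add_le_add_left ordP 1
  obtain ⟨A, hA, hPA⟩ := (natCast_le_analyticOrderAt hP).mp ordP
  obtain ⟨C, hC, hρC⟩ := (natCast_le_analyticOrderAt hρ).mp ordρ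
  simp only [sub_zero, smul_eq_mul] at hPA hρC
  have dP : ∀ᶠ z in 𝓝 (0 : ℂ), deriv P z = 2 * z * A z + z ^ 2 * deriv A z := by
    filter_upwards [hPA.eventually_nhds, hA.eventually_analyticAt] with z hz hAz
    rw [EventuallyEq.deriv_eq hz]
    simpa using ((hasDerivAt_pow 2 z).fun_mul hAz.differentiableAt.hasDerivAt).deriv
  have ddP : ∀ᶠ z in 𝓝 (0 : ℂ), deriv (deriv P) z =
      2 * A z + 4 * z * deriv A z + z ^ 2 * deriv (deriv A) z := by
    filter_upwards [dP.eventually_nhds, hA.eventually_analyticAt] with z hz hAz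
    rw [EventuallyEq.deriv_eq hz]
    have h1 := (((hasDerivAt_id' z).const_mul 2).fun_mul hAz.differentiableAt.hasDerivAt).fun_add
      ((hasDerivAt_pow 2 z).fun_mul hAz.deriv.differentiableAt.hasDerivAt)
    rw [h1.deriv]
    push_cast
    ring
  have dρ : ∀ᶠ z in 𝓝 (0 : ℂ), deriv ρ z = 3 * z ^ 2 * C z + z ^ 3 * deriv C z := by
    filter_upwards [hρC.eventually_nhds, hC.eventually_analyticAt] with z hz hCz
    rw [EventuallyEq.deriv_eq hz]
    simpa using ((hasDerivAt_pow 3 z).fun_mul hCz.differentiableAt.hasDerivAt).deriv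
  refine ⟨fun z ↦ 6 * (P z - η) * deriv P z + 2 * ρ z * deriv (deriv P) z -
    2 * z * η * deriv (deriv P) z + 14 * deriv A z + 2 * z * deriv (deriv A) z - 4 * deriv C z,
    ?_, ?_⟩
  · have := hP.deriv
    have := hP.deriv.deriv
    have := hA.deriv
    have := hA.deriv.deriv
    have := hC.deriv
    fun_prop
  · filter_upwards [self_mem_nhdsWithin, nhdsWithin_le_nhds hPA, nhdsWithin_le_nhds hρC,
      nhdsWithin_le_nhds dP, nhdsWithin_le_nhds ddP, nhdsWithin_le_nhds dρ,
      nhdsWithin_le_nhds hρP] with z hz0 e1 e2 e3 e4 e5 e6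
    have hz : z ≠ 0 := hz0
    have hAC : A z = -3 * C z - z * deriv C z := by
      refine mul_left_cancel₀ (pow_ne_zero 2 hz) ?_
      rw [e5, e1] at e6
      linear_combination e6
    rw [e1, e2, e3, e4, hAC]
    field_simp
    ring

/-- The regular part of a Weierstrass zeta function is analytic at the origin, with derivative the
negative of the regular part of `℘`. -/
lemma PeriodPair.analyticAt_zeta_sub_inv (L : PeriodPair) {ζ : ℂ → ℂ} (hζ0 : ζ 0 = 0)
    (hder : ∀ z ∉ L.lattice, HasDerivAt ζ (-L.weierstrassP z) z)
    (hlim : Tendsto (fun z ↦ ζ z - z⁻¹) (𝓝[≠] 0) (𝓝 0)) :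
    AnalyticAt ℂ (fun z ↦ ζ z - z⁻¹) 0 ∧
      deriv (fun z ↦ ζ z - z⁻¹) =ᶠ[𝓝 0] fun z ↦ -L.weierstrassPExcept 0 z := by
  have hd : ∀ᶠ z in 𝓝[≠] (0 : ℂ),
      HasDerivAt (fun z ↦ ζ z - z⁻¹) (-L.weierstrassPExcept 0 z) z := by
    filter_upwards [L.eventually_notMem_lattice, self_mem_nhdsWithin] with z hz hz0
    convert! (hder z hz).sub (hasDerivAt_inv hz0) using 1
    rw [L.weierstrassP_eq_zero_add]
    ring
  have hcont : ContinuousAt (fun z ↦ ζ z - z⁻¹) 0 := by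
    rw [continuousAt_iff_punctured_nhds]
    simpa [hζ0] using hlim
  have han := Complex.analyticAt_of_differentiable_on_punctured_nhds_of_continuousAt
    (hd.mono fun z hz ↦ hz.differentiableAt) hcont
  refine ⟨han, ?_⟩
  have heq : ∀ᶠ z in 𝓝[≠] (0 : ℂ), deriv (fun z ↦ ζ z - z⁻¹) z = -L.weierstrassPExcept 0 z :=
    hd.mono fun z hz ↦ hz.deriv
  exact (han.deriv.frequently_eq_iff_eventually_eq
    (L.analyticAt_weierstrassPExcept 0).neg).mp heq.frequently

/-- The second quasi-period of a Weierstrass zeta function, in terms of the first. -/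
lemma zeta_add_tau {τ : ℂ} (hτ : 0 < τ.im) {ζ : ℂ → ℂ} {η : ℂ} (hodd : ∀ z, ζ (-z) = -ζ z)
    (hder : ∀ z, ¬ InLattice τ z → HasDerivAt ζ (-wp τ z) z)
    (hlim : Tendsto (fun z ↦ ζ z - z⁻¹) (𝓝[≠] 0) (𝓝 0))
    (hη : ∀ z, ¬ InLattice τ z → η = ζ (z + 1) - ζ z) {z : ℂ} (hz : ¬ InLattice τ z) :
    ζ (z + τ) = ζ z + η * τ - 2 * Real.pi * I := by
  set L := tauPair τ hτ
  have mem (z : ℂ) : z ∈ L.lattice ↔ InLattice τ z := mem_tauPair_lattice hτ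
  have hτL : τ ∈ L.lattice := (mem τ).mpr ⟨0, 1, by simp⟩
  have hder' (z : ℂ) (hz : z ∉ L.lattice) : HasDerivAt ζ (-L.weierstrassP z) z := by
    rw [← wp_eq hτ]
    exact hder z (mt (mem z).mpr hz)
  have hζ0 : ζ 0 = 0 := by
    have := hodd 0
    rw [neg_zero] at this
    exact self_eq_neg.mp this
  have hdiff (w : ℂ) (hw : w ∈ (L.lattice : Set ℂ)ᶜ) :
      HasDerivAt (fun w ↦ ζ (w + τ) - ζ w) 0 w := by
    have h1 := (hder' (w + τ) fun h ↦ hw ((L.lattice.add_mem_iff_left hτL).mp h)).comp_add_const w τ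
    convert! h1.sub (hder' w hw) using 1
    rw [L.weierstrassP_add_coe w ⟨τ, hτL⟩]
    ring
  obtain ⟨κ, hκ⟩ := L.isClosed_lattice.isOpen_compl.exists_is_const_of_deriv_eq_zero
    L.isPreconnected_compl_lattice (fun w hw ↦ (hdiff w hw).differentiableAt.differentiableWithinAt)
    (fun w hw ↦ (hdiff w hw).deriv)
  have hρ := (L.analyticAt_zeta_sub_inv hζ0 hder' hlim).1.differentiableAt
  have key := legendre_relation hτ (φ := fun w ↦ ζ w - w * η) (κ := κ - η * τ)
    (fun w hw ↦ (hder w hw).differentiableAt.fun_sub (by fun_prop))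
    (by
      convert! hρ.fun_sub ((differentiableAt_id (𝕜 := ℂ) (x := (0 : ℂ))).mul_const η) using 2 with w
      simp only [id]
      ring)
    (fun w hw ↦ by linear_combination -hη w hw)
    (fun w hw ↦ by
      have := hκ w (mt (mem w).mp hw)
      linear_combination this)
  have := hκ z (mt (mem z).mp hz)
  linear_combination this + key

lemma wpdTau_eq {τ : ℂ} (hτ : 0 < τ.im) {ζ : ℂ → ℂ} {η : ℂ} (hodd : ∀ z, ζ (-z) = -ζ z)
    (hder : ∀ z, ¬ InLattice τ z → HasDerivAt ζ (-wp τ z) z)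
    (hlim : Tendsto (fun z ↦ ζ z - z⁻¹) (𝓝[≠] 0) (𝓝 0))
    (hη : ∀ z, ¬ InLattice τ z → η = ζ (z + 1) - ζ z) {z : ℂ} (hz : ¬ InLattice τ z) :
    wpdTau τ z = (-I / (4 * Real.pi)) * (6 * (wp τ z - η) * wpd τ z +
      (ζ z - z * η) * (12 * wp τ z ^ 2 - g2 τ)) := by
  set L := tauPair τ hτ
  have mem (z : ℂ) : z ∈ L.lattice ↔ InLattice τ z := mem_tauPair_lattice hτ
  have h1L : (1 : ℂ) ∈ L.lattice := (mem 1).mpr ⟨1, 0, by simp⟩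
  have hτL : τ ∈ L.lattice := (mem τ).mpr ⟨0, 1, by simp⟩
  have hζτ (w : ℂ) (hw : ¬ InLattice τ w) := zeta_add_tau hτ hodd hder hlim hη hw
  have hder' (z : ℂ) (hz : z ∉ L.lattice) : HasDerivAt ζ (-L.weierstrassP z) z := by
    rw [← wp_eq hτ]
    exact hder z (mt (mem z).mpr hz)
  have hζ0 : ζ 0 = 0 := by
    have := hodd 0
    rw [neg_zero] at this
    exact self_eq_neg.mp this
  have hdd (w : ℂ) (hw : w ∉ L.lattice) :
      deriv (wpd τ) w = (12 * L.weierstrassP w ^ 2 - L.g₂) / 2 := by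
    rw [wpd_eq hτ, ← L.two_mul_deriv_derivWeierstrassP hw]
    ring
  have hc : (-I / (4 * Real.pi)) * (-(2 * Real.pi * I)) * 2 = -1 := by
    have : (Real.pi : ℂ) ≠ 0 := by exact_mod_cast Real.pi_ne_zero
    field_simp
    rw [Complex.I_sq]
    ring
  set c : ℂ := -I / (4 * Real.pi)
  let G : ℂ → ℂ := fun w ↦ 6 * (L.weierstrassP w - η) * L.derivWeierstrassP w +
    (ζ w - w * η) * (12 * L.weierstrassP w ^ 2 - L.g₂)
  classical
  let D : ℂ → ℂ := fun w ↦ if w ∈ L.lattice then 0 else wpdTau τ w - c * G w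
  have hD (w : ℂ) (hw : w ∉ L.lattice) : D w = wpdTau τ w - c * G w := if_neg hw
  have per1 : Function.Periodic D 1 := by
    intro w
    simp only [D, L.lattice.add_mem_iff_left h1L]
    split_ifs with hw
    · rfl
    have hw' := mt (mem w).mpr hw
    have e1 : L.weierstrassP (w + 1) = L.weierstrassP w := L.weierstrassP_add_coe w ⟨1, h1L⟩
    have e2 : L.derivWeierstrassP (w + 1) = L.derivWeierstrassP w :=
      L.derivWeierstrassP_add_coe w ⟨1, h1L⟩
    simp only [G, wpdTau_add_one, e1, e2]
    linear_combination c * (12 * L.weierstrassP w ^ 2 - L.g₂) * hη w hw'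
  have perτ : Function.Periodic D τ := by
    intro w
    simp only [D, L.lattice.add_mem_iff_left hτL]
    split_ifs with hw
    · rfl
    have hw' := mt (mem w).mpr hw
    have e1 : L.weierstrassP (w + τ) = L.weierstrassP w := L.weierstrassP_add_coe w ⟨τ, hτL⟩
    have e2 : L.derivWeierstrassP (w + τ) = L.derivWeierstrassP w :=
      L.derivWeierstrassP_add_coe w ⟨τ, hτL⟩
    simp only [G, wpdTau_add_tau hτ hw', e1, e2, hdd w hw, hζτ w hw']
    linear_combination -(12 * L.weierstrassP w ^ 2 - L.g₂) / 2 * hc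
  have per (l : ℂ) (hl : l ∈ L.lattice) : Function.Periodic D l := by
    obtain ⟨m, n, rfl⟩ := (mem l).mp hl
    have h1 := per1.int_mul m
    rw [mul_one] at h1
    exact h1.add_period (perτ.int_mul n)
  have diffD : DifferentiableOn ℂ D (L.lattice : Set ℂ)ᶜ := by
    have : Set.EqOn D (fun w ↦ wpdTau τ w - c * G w) (L.lattice : Set ℂ)ᶜ := fun w hw ↦ hD w hw
    refine DifferentiableOn.congr (fun w hw ↦ ?_) this
    have a1 := differentiableAt_wpdTau hτ (z := w) fun m n _ h ↦ hw ((mem w).mpr ⟨m, n, h⟩)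
    have a2 := (L.analyticOnNhd_weierstrassP w hw).differentiableAt
    have a3 := (L.analyticOnNhd_derivWeierstrassP w hw).differentiableAt
    have a4 := (hder' w hw).differentiableAt
    refine DifferentiableAt.differentiableWithinAt ?_
    simp only [G]
    fun_prop
  obtain ⟨hρ, hρP⟩ := L.analyticAt_zeta_sub_inv hζ0 hder' hlim
  have dP : deriv (L.weierstrassPExcept 0) =ᶠ[𝓝 0] L.derivWeierstrassPExcept 0 :=
    eventually_of_mem (L.compl_lattice_sdiff_singleton_mem_nhds 0)
      (L.eqOn_deriv_weierstrassPExcept_derivWeierstrassPExcept 0)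
  obtain ⟨B, hB, hGB⟩ := exists_analyticAt_heat (L.analyticAt_weierstrassPExcept 0) hρ
    (by simp) (by simp) (by simp [hζ0]) hρP η
  have anTau : AnalyticAt ℂ (wpdTau τ) 0 := by
    refine Complex.analyticAt_iff_eventually_differentiableAt.mpr ?_
    filter_upwards [L.compl_lattice_sdiff_singleton_mem_nhds 0] with w hw
    refine differentiableAt_wpdTau hτ fun m n hn h ↦ hw ⟨(mem w).mpr ⟨m, n, h⟩, fun h0 ↦ ?_⟩
    have him := congrArg Complex.im (h.symm.trans h0)
    simp [hτ.ne', hn] at him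
  have key (w : ℂ) (hw : w ∉ L.lattice) : D w = wpdTau τ 0 - c * B 0 := by
    refine L.apply_eq_of_analyticAt_zero (M := L.lattice.toAddSubgroup) (f := D)
      (A := fun w ↦ wpdTau τ w - c * B w) L.isClosed_lattice (fun l hl ↦ hl) diffD per
      (by fun_prop) ?_ hw
    filter_upwards [L.eventually_notMem_lattice, hGB, self_mem_nhdsWithin,
      nhdsWithin_le_nhds dP, nhdsWithin_le_nhds dP.deriv] with w hw hGw hw0 e1 e2
    refine ⟨hw, ?_⟩
    rw [hD w hw, ← hGw]
    have hw0' : w ≠ 0 := hw0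
    have e3 : deriv L.derivWeierstrassP w = deriv (L.derivWeierstrassPExcept 0) w + 6 / w ^ 4 := by
      rw [show L.derivWeierstrassP = fun w ↦ L.derivWeierstrassPExcept 0 w - 2 / w ^ 3 from
        funext L.derivWeierstrassP_eq_zero_add]
      have h1 := (L.analyticOnNhd_derivWeierstrassPExcept 0 w
        fun h ↦ hw h.1).differentiableAt.hasDerivAt
      have h2 := (hasDerivAt_const w (2 : ℂ)).fun_div (hasDerivAt_pow 3 w) (pow_ne_zero 3 hw0')
      rw [(h1.fun_sub h2).deriv]
      field_simp
      push_cast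
      ring
    simp only [G]
    rw [← L.two_mul_deriv_derivWeierstrassP hw, e3, e1, e2, L.weierstrassP_eq_zero_add,
      L.derivWeierstrassP_eq_zero_add]
    ring
  have hzL : z ∉ L.lattice := mt (mem z).mp hz
  have hodd_D : D (-z) = -D z := by
    rw [hD z hzL, hD (-z) (by rwa [L.lattice.neg_mem_iff])]
    simp only [G, wpdTau_neg, hodd, L.weierstrassP_neg, L.derivWeierstrassP_neg]
    ring
  rw [key z hzL, key (-z) (by rwa [L.lattice.neg_mem_iff]), self_eq_neg, ← key z hzL, hD z hzL,
    sub_eq_zero] at hodd_D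
  rw [hodd_D, wp_eq hτ, wpd_eq hτ, g2_eq hτ]

/-- Lemma 2.3 (iv): the `τ`-derivative of `℘′(z|τ)`. -/
theorem tau_deriv_wpd
    (zeta : ℂ → ℂ → ℂ) (eta1 : ℂ → ℂ)
    (hzeta : IsWeierstrassZeta zeta) (heta1 : IsEta1 zeta eta1) :
    ∀ τ : ℂ, 0 < τ.im → ∀ z : ℂ, ¬ InLattice τ z →
    HasDerivAt (fun t => wpd t z)
      ((-Complex.I / (4 * (Real.pi : ℂ))) *
        (6 * (wp τ z - eta1 τ) * wpd τ z
          + (zeta τ z - z * eta1 τ) * (12 * (wp τ z) ^ 2 - g2 τ))) τ := by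
  intro τ hτ z hz
  obtain ⟨hodd, hder, hlim⟩ := hzeta τ hτ
  rw [← wpdTau_eq hτ hodd hder hlim (heta1 τ hτ) hz]
  exact hasDerivAt_wpd_tau hτ hz
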